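/- There exists a constant K > 0 such that for every x in the closed positive Weyl chamber ā₊, 0 ≤ (ρ, x) + (x, ∇F_0(x))/F_0(x) ≤ K. (The middle quantity is the Euler operator E f(x) = (x, ∇f(x)) applied to f = log(e^{(ρ,·)} F_0).) -/

import Mathlib

open scoped BigOperators RealInnerProductSpace Classical

noncomputable section

variable {E : Type*} [NormedAddCommGroup E] [InnerProductSpace ℝ E] [FiniteDimensional ℝ E]

/-- The coroot `α∨ = 2α/|α|²`. -/
def coroot (α : E) : E := (2 / ⟪α, α⟫) • α

/-- The orthogonal reflection `r_α x = x - (α∨, x) α`. -/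
def rRefl (α : E) (x : E) : E := x - ⟪coroot α, x⟫ • α

/-- Data of an integral root system with positive subsystem and
a Weyl-invariant positive multiplicity function. -/
structure HOData (E : Type*) [NormedAddCommGroup E] [InnerProductSpace ℝ E] : Type _ where
  R : Finset E
  Rpos : Finset E
  k : E → ℝ
  k_pos : ∀ α ∈ R, 0 < k α
  root_ne_zero : ∀ α ∈ R, α ≠ 0
  pos_subset : Rpos ⊆ R
  pos_char : ∃ u : E, ∀ α ∈ R, (α ∈ Rpos ↔ 0 < ⟪α, u⟫)
  pos_or_neg : ∀ α ∈ R, α ∈ Rpos ∨ -α ∈ Rpos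
  neg_mem : ∀ α ∈ R, -α ∈ R
  integral : ∀ α ∈ R, ∀ β ∈ R, ∃ n : ℤ, ⟪coroot α, β⟫ = (n : ℝ)
  refl_mem : ∀ α ∈ R, ∀ β ∈ R, rRefl α β ∈ R
  k_inv : ∀ α ∈ R, ∀ β ∈ R, k (rRefl α β) = k β

/-- The Weyl group: the subgroup of linear isometries generated by the root reflections. -/
def weylGroup (D : HOData E) : Subgroup (E ≃ₗᵢ[ℝ] E) :=
  Subgroup.closure {w : E ≃ₗᵢ[ℝ] E | ∃ α ∈ D.R, ∀ x, w x = rRefl α x}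

/-- `ρ = (1/2) Σ_{α ∈ R⁺} k_α α`. -/
def rhoHO (D : HOData E) : E := (2:ℝ)⁻¹ • ∑ α ∈ D.Rpos, D.k α • α

/-- Regular points. -/
def HORegular (D : HOData E) (x : E) : Prop := ∀ α ∈ D.R, ⟪α, x⟫ ≠ 0

/-- The (open) positive Weyl chamber. -/
def posChamber (D : HOData E) : Set E := {x | ∀ α ∈ D.Rpos, 0 < ⟪α, x⟫}

/-- The positive indivisible roots `R₀⁺`. -/
def Rpos0 (D : HOData E) : Finset E := D.Rpos.filter (fun α => (2:ℝ)⁻¹ • α ∉ D.R)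

/-- The Opdam function `G_λ` for a real parameter `λ`: an analytic function,
normalized at `0`, satisfying the Cherednik differential-difference system. -/
def IsOpdamR (D : HOData E) (lam : E) (G : E → ℝ) : Prop :=
  AnalyticOnNhd ℝ G Set.univ ∧ G 0 = 1 ∧
  ∀ ξ x, HORegular D x →
    fderiv ℝ G x ξ =
      (∑ α ∈ D.Rpos, D.k α * ⟪α, ξ⟫ / (1 - Real.exp (-⟪α, x⟫)) * (G (rRefl α x) - G x))
      + ⟪rhoHO D + lam, ξ⟫ * G x

/-- The Opdam function `G_λ` for a complex parameter `λ = l1 + i l2 ∈ h`. -/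
def IsOpdamC (D : HOData E) (l1 l2 : E) (G : E → ℂ) : Prop :=
  AnalyticOnNhd ℝ G Set.univ ∧ G 0 = 1 ∧
  ∀ ξ x, HORegular D x →
    fderiv ℝ G x ξ =
      (∑ α ∈ D.Rpos, ((D.k α * ⟪α, ξ⟫ / (1 - Real.exp (-⟪α, x⟫)) : ℝ) : ℂ)
          * (G (rRefl α x) - G x))
      + (((⟪rhoHO D + l1, ξ⟫ : ℝ) : ℂ) + Complex.I * ((⟪l2, ξ⟫ : ℝ) : ℂ)) * G x

/-- The symmetrization `F(x) = |W|⁻¹ Σ_{w ∈ W} G(w x)` (real valued case). -/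
def Fsym (D : HOData E) [Fintype (weylGroup D)] (G : E → ℝ) (x : E) : ℝ :=
  (Fintype.card (weylGroup D) : ℝ)⁻¹ * ∑ w : weylGroup D, G (w.1 x)

/-- The symmetrization `F(x) = |W|⁻¹ Σ_{w ∈ W} G(w x)` (complex valued case). -/
def FsymC (D : HOData E) [Fintype (weylGroup D)] (G : E → ℂ) (x : E) : ℂ :=
  (Fintype.card (weylGroup D) : ℂ)⁻¹ * ∑ w : weylGroup D, G (w.1 x)

/-- `max_{w ∈ W} (w λ, x)`. -/
def maxW (D : HOData E) [Fintype (weylGroup D)] (lam x : E) : ℝ :=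
  ⨆ w : weylGroup D, ⟪w.1 lam, x⟫

/-!
Along the Euler field, the Cherednik system reads `(E + |ρ|) G = T G` at regular points, with a
Weyl-invariant `|ρ| = absRho` and `T = cherednikEuler`. Summing over a Weyl orbit moves `T` to the
weights: `(E + |ρ|) ∑ Φ(w x) G(w x) = ∑ (T* Φ)(w x) G(w x)`. The chain weights `Φ_j` start at
`Φ_0 = 1` and satisfy `T* Φ_j = Φ_{j+1} + O(Φ_j)`, with `T* Φ_0 = Φ_1 - Φ_0` exactly, so in terms
of the moments `μ_j = ∑ Φ_j(w x) G(w x)` the quantity to bound is `μ_1 / μ_0 - 1`.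

Every reflection carrying a nonzero weight moves a point strictly upwards within its finite orbit,
hence `Φ_{N+1} = Φ_N` on orbits for `N = |W|` and `μ_{N+1} = μ_N`. A bound `μ_{j+2} ≤ K μ_{j+1}`
implies one of the form `μ_{j+1} ≤ L μ_j`: for large `L` the differential inequality for
`L μ_j - μ_{j+1}` along rays from the origin keeps this function positive. Descending from `N`
to `0` gives the bound on `μ_1 / μ_0`.
-/

section Calculus

lemma monotoneOn_pow_mul_of_neg_le_mul_deriv {f : ℝ → ℝ} {n : ℕ} {a b : ℝ} (ha : 0 ≤ a)
    (hcont : ContinuousOn f (Set.Icc a b)) (hdiff : ∀ t ∈ Set.Ioo a b, DifferentiableAt ℝ f t)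
    (hderiv : ∀ t ∈ Set.Ioo a b, -(n * f t) ≤ t * deriv f t) :
    MonotoneOn (fun t => t ^ n * f t) (Set.Icc a b) := by
  refine monotoneOn_of_deriv_nonneg (convex_Icc a b) ((continuousOn_pow n).mul hcont) ?_ ?_
  all_goals rw [interior_Icc]; intro t ht
  · exact ((differentiableAt_pow n).mul (hdiff t ht)).differentiableWithinAt
  have ht_pos : 0 < t := ha.trans_lt ht.1
  have hpow : t * (n * t ^ (n - 1)) = n * t ^ n := by
    cases n with
    | zero => simp
    | succ n => rw [Nat.add_sub_cancel]; ring
  rw [deriv_fun_mul (differentiableAt_pow n) (hdiff t ht), deriv_pow_field]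
  refine nonneg_of_mul_nonneg_right (a := t) ?_ ht_pos
  calc 0 ≤ t ^ n * (n * f t + t * deriv f t) :=
        mul_nonneg (pow_nonneg ht_pos.le n) (by linarith [hderiv t ht])
    _ = t * (n * t ^ (n - 1) * f t + t ^ n * deriv f t) := by
        rw [mul_add t, ← mul_assoc t, hpow]; ring

lemma pos_of_neg_le_mul_deriv {ι : Type*} [Finite ι] {ψ : ι → ℝ → ℝ} {κ b : ℝ} (hb : 0 ≤ b)
    (hcont : ∀ i, ContinuousOn (ψ i) (Set.Icc 0 b)) (h_zero : ∀ i, 0 < ψ i 0)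
    (hdiff : ∀ i, ∀ t ∈ Set.Ioo 0 b, DifferentiableAt ℝ (ψ i) t)
    (hderiv : ∀ t ∈ Set.Ioo 0 b, (∀ i, 0 ≤ ψ i t) → ∀ i, -(κ * ψ i t) ≤ t * deriv (ψ i) t)
    (i : ι) : 0 < ψ i b := by
  by_contra! hi
  have hclosed : IsClosed (⋃ i, Set.Icc 0 b ∩ ψ i ⁻¹' Set.Iic 0) :=
    isClosed_iUnion_of_finite fun i =>
      (hcont i).preimage_isClosed_of_isClosed isClosed_Icc isClosed_Iic
  have hcompact : IsCompact (⋃ i, Set.Icc 0 b ∩ ψ i ⁻¹' Set.Iic 0) :=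
    isCompact_Icc.of_isClosed_subset hclosed (Set.iUnion_subset fun _ => Set.inter_subset_left)
  obtain ⟨T, hT, hleast⟩ := hcompact.exists_isLeast
    ⟨b, Set.mem_iUnion.2 ⟨i, Set.right_mem_Icc.2 hb, hi⟩⟩
  obtain ⟨i, ⟨hT_nonneg, hTb⟩, hiT : ψ i T ≤ 0⟩ := Set.mem_iUnion.1 hT
  have hT_pos : 0 < T := hT_nonneg.lt_of_ne fun h => by
    rw [← h] at hiT
    exact (h_zero i).not_ge hiT
  have hbefore : ∀ t ∈ Set.Ico 0 T, ∀ j, 0 < ψ j t := by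
    intro t ht j
    by_contra! hj
    exact ht.2.not_ge (hleast (Set.mem_iUnion.2 ⟨j, ⟨ht.1, ht.2.le.trans hTb⟩, hj⟩))
  obtain ⟨n, hn⟩ := exists_nat_ge κ
  have hmono : MonotoneOn (fun t => t ^ n * ψ i t) (Set.Icc 0 T) := by
    refine monotoneOn_pow_mul_of_neg_le_mul_deriv le_rfl
      ((hcont i).mono (Set.Icc_subset_Icc_right hTb))
      (fun t ht => hdiff i t ⟨ht.1, ht.2.trans_le hTb⟩) fun t ht => ?_
    have hpos := fun j => (hbefore t ⟨ht.1.le, ht.2⟩ j).le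
    have hge := hderiv t ⟨ht.1, ht.2.trans_le hTb⟩ hpos i
    linarith [mul_le_mul_of_nonneg_right hn (hpos i)]
  have hhalf := hbefore (T / 2) ⟨by linarith, by linarith⟩ i
  have hpos : 0 < (T / 2) ^ n * ψ i (T / 2) := by positivity
  have hle : (T / 2) ^ n * ψ i (T / 2) ≤ T ^ n * ψ i T :=
    hmono ⟨by linarith, by linarith⟩ (Set.right_mem_Icc.2 hT_nonneg) (by linarith)
  linarith [mul_nonpos_of_nonneg_of_nonpos (pow_nonneg hT_nonneg n) hiT]

lemma hasDerivAt_comp_smul {F : Type*} [NormedAddCommGroup F] [NormedSpace ℝ F] {f : F → ℝ}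
    {y : F} {t : ℝ} (hf : DifferentiableAt ℝ f (t • y)) :
    HasDerivAt (fun s : ℝ => f (s • y)) (fderiv ℝ f (t • y) y) t := by
  have hsmul : HasDerivAt (fun s : ℝ => s • y) y t := by
    simpa using (hasDerivAt_id t).smul_const y
  exact hf.hasFDerivAt.comp_hasDerivAt t hsmul

/-- The function `s / (exp s - 1)`, with the junk value `0`, not the limit `1`, at `s = 0`. -/
def divExpSubOne (s : ℝ) : ℝ := s / (Real.exp s - 1)

lemma divExpSubOne_nonneg {s : ℝ} (hs : 0 ≤ s) : 0 ≤ divExpSubOne s :=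
  div_nonneg hs (sub_nonneg.2 (Real.one_le_exp hs))

lemma divExpSubOne_le_one {s : ℝ} (hs : 0 ≤ s) : divExpSubOne s ≤ 1 :=
  div_le_one_of_le₀ (by linarith [Real.add_one_le_exp s]) (sub_nonneg.2 (Real.one_le_exp hs))

lemma divExpSubOne_le {s : ℝ} (hs : 0 ≤ s) : divExpSubOne s ≤ (1 + s) / Real.exp s := by
  rcases hs.eq_or_lt with rfl | hs
  · simp [divExpSubOne]
  have h := Real.add_one_le_exp s
  rw [divExpSubOne, div_le_div_iff₀ (by linarith) (Real.exp_pos s)]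
  linarith

lemma exists_divExpSubOne_mul_pow_le (n : ℕ) {c : ℝ} (hc : 0 ≤ c) :
    ∃ B : ℝ, 0 ≤ B ∧ ∀ s : ℝ, 0 ≤ s → divExpSubOne s * (1 + c * s) ^ n ≤ B := by
  refine ⟨(1 + c) ^ n * ((n + 1).factorial * Real.exp 1), by positivity, fun s hs => ?_⟩
  have hexp : (1 + s) ^ (n + 1) ≤ (n + 1).factorial * Real.exp 1 * Real.exp s := by
    have := Real.pow_div_factorial_le_exp (1 + s) (by linarith) (n + 1)
    rw [div_le_iff₀ (by positivity), Real.exp_add] at this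
    linarith
  calc divExpSubOne s * (1 + c * s) ^ n
      ≤ (1 + s) / Real.exp s * ((1 + c) * (1 + s)) ^ n := by
        gcongr
        · exact divExpSubOne_le hs
        · linarith
    _ = (1 + c) ^ n * ((1 + s) ^ (n + 1) / Real.exp s) := by rw [mul_pow]; ring
    _ ≤ (1 + c) ^ n * ((n + 1).factorial * Real.exp 1) := by
        gcongr
        rwa [div_le_iff₀ (Real.exp_pos s)]

lemma div_one_sub_exp_neg {s : ℝ} (hs : s ≠ 0) :
    s / (1 - Real.exp (-s)) = divExpSubOne |s| + s⁺ := by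
  rcases hs.lt_or_gt with hs | hs
  · rw [abs_of_neg hs, posPart_eq_zero.2 hs.le, add_zero, divExpSubOne, ← neg_sub, div_neg, neg_div]
  · have h : Real.exp s - 1 ≠ 0 := (sub_pos.2 (Real.one_lt_exp_iff.2 hs)).ne'
    rw [abs_of_pos hs, posPart_eq_self.2 hs.le, divExpSubOne, Real.exp_neg]
    field_simp
    ring

lemma negPart_le_two_mul_negPart {s s' : ℝ} (h : |s' - s| ≤ |s|) : s'⁻ ≤ 2 * s⁻ := by
  rw [abs_le] at h
  rcases le_or_gt 0 s with hs | hs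
  · rw [abs_of_nonneg hs] at h
    rw [negPart_eq_zero.2 hs, negPart_eq_zero.2 (by linarith), mul_zero]
  · rw [abs_of_neg hs] at h
    rw [negPart_eq_neg.2 hs.le]
    exact max_le (by linarith) (by linarith)

end Calculus

section Reflections

variable {V : Type*} [NormedAddCommGroup V] [InnerProductSpace ℝ V]

lemma rRefl_eq_reflection (α x : V) : rRefl α x = (ℝ ∙ α)ᗮ.reflection x := by
  rw [Submodule.reflection_orthogonal_apply, Submodule.reflection_singleton_apply, rRefl, coroot,
    real_inner_smul_left, real_inner_self_eq_norm_sq]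
  module

lemma rRefl_rRefl (α x : V) : rRefl α (rRefl α x) = x := by
  simp only [rRefl_eq_reflection, Submodule.reflection_reflection]

lemma rRefl_self (α : V) : rRefl α α = -α := by
  rw [rRefl_eq_reflection, Submodule.reflection_orthogonalComplement_singleton_eq_neg]

lemma rRefl_smul (α : V) (c : ℝ) (x : V) : rRefl α (c • x) = c • rRefl α x := by
  simp only [rRefl_eq_reflection, map_smul]

lemma norm_rRefl_sub_rRefl (α x y : V) : ‖rRefl α x - rRefl α y‖ = ‖x - y‖ := by
  simp only [rRefl_eq_reflection, ← map_sub, LinearIsometryEquiv.norm_map]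

lemma inner_coroot (α x : V) : ⟪coroot α, x⟫ = 2 * ⟪α, x⟫ / ‖α‖ ^ 2 := by
  rw [coroot, real_inner_smul_left, real_inner_self_eq_norm_sq]
  ring

lemma inner_rRefl_right (α β x : V) : ⟪α, rRefl β x⟫ = ⟪rRefl β α, x⟫ := by
  simp only [rRefl, inner_sub_left, inner_sub_right, real_inner_smul_left, real_inner_smul_right,
    inner_coroot, real_inner_comm α β]
  ring

lemma inner_rRefl_self_right (α x : V) : ⟪α, rRefl α x⟫ = -⟪α, x⟫ := by
  rw [inner_rRefl_right, rRefl_self, inner_neg_left]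

lemma norm_rRefl_sub_self (α x : V) : ‖rRefl α x - x‖ = 2 * |⟪α, x⟫| / ‖α‖ := by
  rw [rRefl, sub_sub_cancel_left, norm_neg, norm_smul, inner_coroot, Real.norm_eq_abs, abs_div,
    abs_mul, abs_two, abs_of_nonneg (by positivity : 0 ≤ ‖α‖ ^ 2)]
  rcases eq_or_ne ‖α‖ 0 with h | h
  · simp [h]
  · field_simp

lemma inner_lt_inner_rRefl {α u y : V} (hα : 0 < ⟪α, u⟫) (hy : ⟪α, y⟫ < 0) :
    ⟪y, u⟫ < ⟪rRefl α y, u⟫ := by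
  have hα_ne : α ≠ 0 := by
    rintro rfl
    exact hα.ne' (inner_zero_left u)
  have hcoroot : ⟪coroot α, y⟫ < 0 := by
    rw [inner_coroot]
    exact div_neg_of_neg_of_pos (by linarith) (pow_pos (norm_pos_iff.2 hα_ne) 2)
  rw [rRefl, inner_sub_left, real_inner_smul_left]
  linarith [mul_neg_of_neg_of_pos hcoroot hα]

lemma abs_inner_sub_inner_le (α y y' : V) : |⟪α, y'⟫ - ⟪α, y⟫| ≤ ‖α‖ * ‖y' - y‖ := by
  rw [← inner_sub_right]
  exact abs_real_inner_le_norm α (y' - y)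

end Reflections

namespace HOData

variable {V : Type*} [NormedAddCommGroup V] [InnerProductSpace ℝ V] {D : HOData V}

lemma neg_notMem_Rpos {α : V} (hα : α ∈ D.Rpos) : -α ∉ D.Rpos := by
  obtain ⟨u, hu⟩ := D.pos_char
  have hR := D.pos_subset hα
  rw [hu _ (D.neg_mem _ hR), inner_neg_left, not_lt, neg_nonpos]
  exact ((hu α hR).1 hα).le

lemma k_neg {α : V} (hα : α ∈ D.R) : D.k (-α) = D.k α := by
  rw [← rRefl_self, D.k_inv α hα α hα]

lemma k_pos_of_mem_Rpos {α : V} (hα : α ∈ D.Rpos) : 0 < D.k α :=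
  D.k_pos α (D.pos_subset hα)

lemma sum_R_eq_two_mul_sum_Rpos {f : V → ℝ} (hf : ∀ α ∈ D.R, f (-α) = f α) :
    ∑ α ∈ D.R, f α = 2 * ∑ α ∈ D.Rpos, f α := by
  have hneg : ∑ α ∈ D.R \ D.Rpos, f α = ∑ α ∈ D.Rpos, f α := by
    refine Finset.sum_nbij' Neg.neg Neg.neg ?_ ?_ (fun _ _ => neg_neg _) (fun _ _ => neg_neg _) ?_
    · intro α hα
      rw [Finset.mem_sdiff] at hα
      exact (D.pos_or_neg α hα.1).resolve_left hα.2
    · exact fun α hα => Finset.mem_sdiff.2 ⟨D.neg_mem α (D.pos_subset hα), neg_notMem_Rpos hα⟩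
    · exact fun α hα => (hf α (Finset.mem_sdiff.1 hα).1).symm
  rw [← Finset.sum_sdiff D.pos_subset, hneg, two_mul]

/-- The Weyl-invariant extension `½ Σ_{α ∈ R⁺} k_α |(α, y)|` to all of `V` of the linear form
`(ρ, y)` on the closed positive chamber. -/
def absRho (D : HOData V) (y : V) : ℝ := (∑ α ∈ D.Rpos, D.k α * |⟪α, y⟫|) / 2

lemma absRho_nonneg (D : HOData V) (y : V) : 0 ≤ D.absRho y :=
  div_nonneg (Finset.sum_nonneg fun _ hα =>
    mul_nonneg (k_pos_of_mem_Rpos hα).le (abs_nonneg _)) zero_le_two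

lemma absRho_smul (D : HOData V) {t : ℝ} (ht : 0 ≤ t) (y : V) :
    D.absRho (t • y) = t * D.absRho y := by
  simp only [absRho, real_inner_smul_right, abs_mul, abs_of_nonneg ht, mul_left_comm _ t,
    ← Finset.mul_sum, mul_div_assoc]

lemma inner_rhoHO (D : HOData V) (y : V) :
    ⟪rhoHO D, y⟫ = (∑ α ∈ D.Rpos, D.k α * ⟪α, y⟫) / 2 := by
  simp only [rhoHO, real_inner_smul_left, sum_inner]
  ring

lemma absRho_eq_inner_rhoHO {x : V} (hx : x ∈ posChamber D) : D.absRho x = ⟪rhoHO D, x⟫ := by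
  rw [absRho, inner_rhoHO]
  congr 1
  exact Finset.sum_congr rfl fun α hα => by rw [abs_of_pos (hx α hα)]

lemma absRho_rRefl {β : V} (hβ : β ∈ D.R) (y : V) : D.absRho (rRefl β y) = D.absRho y := by
  have hsum : ∀ y, ∑ α ∈ D.R, D.k α * |⟪α, y⟫| = 4 * D.absRho y := fun y => by
    rw [sum_R_eq_two_mul_sum_Rpos fun α hα => by rw [k_neg hα, inner_neg_left, abs_neg], absRho]
    ring
  have hreindex : ∑ α ∈ D.R, D.k α * |⟪α, rRefl β y⟫| = ∑ α ∈ D.R, D.k α * |⟪α, y⟫| :=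
    Finset.sum_nbij' (rRefl β) (rRefl β) (D.refl_mem β hβ) (D.refl_mem β hβ)
      (fun α _ => rRefl_rRefl β α) (fun α _ => rRefl_rRefl β α)
      fun α hα => by rw [inner_rRefl_right, D.k_inv β hβ α hα]
  linarith [hsum y, hsum (rRefl β y)]

lemma regular_rRefl {β x : V} (hβ : β ∈ D.R) (hx : HORegular D x) : HORegular D (rRefl β x) :=
  fun α hα => by
    rw [inner_rRefl_right]
    exact hx _ (D.refl_mem β hβ α hα)

lemma regular_smul {t : ℝ} (ht : t ≠ 0) {x : V} (hx : HORegular D x) : HORegular D (t • x) :=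
  fun α hα => by
    rw [real_inner_smul_right]
    exact mul_ne_zero ht (hx α hα)

lemma regular_of_mem_posChamber {x : V} (hx : x ∈ posChamber D) : HORegular D x := by
  intro α hα h_zero
  rcases D.pos_or_neg α hα with h | h
  · exact (hx _ h).ne' h_zero
  · exact (hx _ h).ne' (by rw [inner_neg_left, h_zero, neg_zero])

/-- The reflection in a root as an element of the Weyl group. -/
def weylRefl (D : HOData V) {α : V} (hα : α ∈ D.R) : weylGroup D :=
  ⟨(ℝ ∙ α)ᗮ.reflection,
    Subgroup.subset_closure ⟨α, hα, fun x => (rRefl_eq_reflection α x).symm⟩⟩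

lemma weylRefl_mul_apply {α : V} (hα : α ∈ D.R) (w : weylGroup D) (x : V) :
    (D.weylRefl hα * w).1 x = rRefl α (w.1 x) :=
  (rRefl_eq_reflection α (w.1 x)).symm

lemma sum_weyl_rRefl [Fintype (weylGroup D)] {α : V} (hα : α ∈ D.R) (f : V → ℝ) (x : V) :
    ∑ w : weylGroup D, f (rRefl α (w.1 x)) = ∑ w : weylGroup D, f (w.1 x) := by
  simp only [← weylRefl_mul_apply hα]
  exact Equiv.sum_comp (Equiv.mulLeft (D.weylRefl hα)) fun w : weylGroup D => f (w.1 x)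

lemma apply_weyl_eq_of_rRefl {β : Sort*} {f : V → β}
    (hf : ∀ α ∈ D.R, ∀ x, f (rRefl α x) = f x) (w : weylGroup D) (x : V) : f (w.1 x) = f x := by
  obtain ⟨w, hw⟩ := w
  change f (w x) = f x
  induction hw using Subgroup.closure_induction generalizing x with
  | mem w hw =>
    obtain ⟨α, hα, hwα⟩ := hw
    rw [hwα, hf α hα]
  | one => rfl
  | mul v w _ _ hv hw =>
    change f (v (w x)) = f x
    rw [hv, hw]
  | inv w _ hw =>
    rw [← hw (w⁻¹ x)]
    exact congrArg f (w.apply_symm_apply x)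

lemma absRho_weyl (w : weylGroup D) (x : V) : D.absRho (w.1 x) = D.absRho x :=
  apply_weyl_eq_of_rRefl (fun _ => absRho_rRefl) w x

lemma regular_weyl (w : weylGroup D) {x : V} (hx : HORegular D x) : HORegular D (w.1 x) := by
  refine (apply_weyl_eq_of_rRefl (fun α hα y => propext ⟨fun h => ?_, regular_rRefl hα⟩) w x).mpr hx
  simpa only [rRefl_rRefl] using regular_rRefl hα h

end HOData

section Operators

namespace HOData

variable {V : Type*} [NormedAddCommGroup V] [InnerProductSpace ℝ V]

/-- The difference operator `T` for which the Cherednik system with `λ = 0` takes the form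
`(E + absRho) G = T G` along the Euler field `E`, at regular points. -/
def cherednikEuler (D : HOData V) (f : V → ℝ) (y : V) : ℝ :=
  ∑ α ∈ D.Rpos, D.k α *
    (divExpSubOne |⟪α, y⟫| * (f (rRefl α y) - f y) + ⟪α, y⟫⁺ * f (rRefl α y))

/-- The adjoint of `cherednikEuler` for the pairing `∑ w, Φ (w x) * f (w x)` of functions along a
Weyl orbit. -/
def cherednikEulerAdj (D : HOData V) (Φ : V → ℝ) (y : V) : ℝ :=
  ∑ α ∈ D.Rpos, D.k α *
    (divExpSubOne |⟪α, y⟫| * (Φ (rRefl α y) - Φ y) + ⟪α, y⟫⁻ * Φ (rRefl α y))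

lemma neg_sum_k_mul_le_cherednikEuler (D : HOData V) {f : V → ℝ} {y : V} (hy : 0 ≤ f y)
    (hf : ∀ α ∈ D.Rpos, 0 ≤ f (rRefl α y)) :
    -((∑ α ∈ D.Rpos, D.k α) * f y) ≤ D.cherednikEuler f y := by
  rw [cherednikEuler, Finset.sum_mul, ← Finset.sum_neg_distrib]
  refine Finset.sum_le_sum fun α hα => ?_
  rw [← mul_neg]
  refine mul_le_mul_of_nonneg_left ?_ (k_pos_of_mem_Rpos hα).le
  have hd_le := mul_le_mul_of_nonneg_right (divExpSubOne_le_one (abs_nonneg ⟪α, y⟫)) hy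
  have hd_nonneg := mul_nonneg (divExpSubOne_nonneg (abs_nonneg ⟪α, y⟫)) (hf α hα)
  have hpos := mul_nonneg (posPart_nonneg ⟪α, y⟫) (hf α hα)
  linarith

lemma sum_weyl_mul_cherednikEuler (D : HOData V) [Fintype (weylGroup D)] (Φ f : V → ℝ) (x : V) :
    ∑ w : weylGroup D, Φ (w.1 x) * D.cherednikEuler f (w.1 x) =
      ∑ w : weylGroup D, D.cherednikEulerAdj Φ (w.1 x) * f (w.1 x) := by
  simp only [cherednikEuler, cherednikEulerAdj, Finset.mul_sum, Finset.sum_mul]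
  rw [Finset.sum_comm, Finset.sum_comm (s := Finset.univ)]
  refine Finset.sum_congr rfl fun α hα => ?_
  have hrefl := sum_weyl_rRefl (D.pos_subset hα)
    (fun y => D.k α * (divExpSubOne |⟪α, y⟫| + ⟪α, y⟫⁺) * (Φ y * f (rRefl α y))) x
  simp only [inner_rRefl_self_right, rRefl_rRefl, abs_neg, posPart_neg] at hrefl
  rw [← sub_eq_zero, ← Finset.sum_sub_distrib] at hrefl ⊢
  rw [← neg_eq_zero, ← Finset.sum_neg_distrib, ← hrefl]
  exact Finset.sum_congr rfl fun w _ => by ring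

end HOData

namespace IsOpdamR

open HOData

variable {V : Type*} [NormedAddCommGroup V] [InnerProductSpace ℝ V] {D : HOData V} {G : V → ℝ}

lemma differentiable (hG : IsOpdamR D 0 G) : Differentiable ℝ G :=
  fun x => (hG.1 x (Set.mem_univ x)).differentiableAt

lemma fderiv_self_add_absRho_mul (hG : IsOpdamR D 0 G) {y : V} (hy : HORegular D y) :
    fderiv ℝ G y y + D.absRho y * G y = D.cherednikEuler G y := by
  rw [hG.2.2 y y hy, add_zero, inner_rhoHO, absRho, cherednikEuler, add_assoc, ← add_mul,
    ← add_div, ← Finset.sum_add_distrib, div_mul_eq_mul_div, Finset.sum_mul, Finset.sum_div,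
    ← Finset.sum_add_distrib]
  refine Finset.sum_congr rfl fun α hα => ?_
  rw [mul_div_assoc, div_one_sub_exp_neg (hy α (D.pos_subset hα))]
  linear_combination
    -(D.k α * G y / 2) * (posPart_add_negPart ⟪α, y⟫ + posPart_sub_negPart ⟪α, y⟫)

lemma pos_of_regular [Finite (weylGroup D)] (hG : IsOpdamR D 0 G) {x : V} (hx : HORegular D x) :
    0 < G x := by
  have hline : ∀ (y : V) (t : ℝ), HasDerivAt (fun s : ℝ => G (s • y)) (fderiv ℝ G (t • y) y) t :=
    fun y t => hasDerivAt_comp_smul (hG.differentiable _)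
  have hpos := pos_of_neg_le_mul_deriv (ι := weylGroup D) (b := 1)
    (ψ := fun w t => G (t • w.1 x)) (κ := (∑ α ∈ D.Rpos, D.k α) + D.absRho x) zero_le_one
    (fun w => (continuous_iff_continuousAt.2 fun t => (hline _ t).continuousAt).continuousOn)
    (fun w => by simp [hG.2.1]) (fun w t _ => (hline _ t).differentiableAt) ?_ 1
  · simpa using hpos
  intro t ht hnonneg w
  have hreg : HORegular D (t • w.1 x) := regular_smul ht.1.ne' (regular_weyl w hx)
  have hT := D.neg_sum_k_mul_le_cherednikEuler (hnonneg w) fun α hα => by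
    simpa only [rRefl_smul, weylRefl_mul_apply] using hnonneg (D.weylRefl (D.pos_subset hα) * w)
  have hrho : D.absRho (t • w.1 x) ≤ D.absRho x := by
    rw [absRho_smul D ht.1.le, absRho_weyl]
    exact mul_le_of_le_one_left (absRho_nonneg D x) ht.2.le
  have hrho_mul := mul_le_mul_of_nonneg_right hrho (hnonneg w)
  have hEuler := hG.fderiv_self_add_absRho_mul hreg
  rw [(hline _ t).deriv, ← smul_eq_mul t, ← ContinuousLinearMap.map_smul]
  linarith

lemma sum_weyl_mul_fderiv_self_add [Fintype (weylGroup D)] (hG : IsOpdamR D 0 G) (Φ : V → ℝ)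
    {x : V} (hx : HORegular D x) :
    ∑ w : weylGroup D, Φ (w.1 x) * fderiv ℝ G (w.1 x) (w.1 x)
        + D.absRho x * ∑ w : weylGroup D, Φ (w.1 x) * G (w.1 x) =
      ∑ w : weylGroup D, D.cherednikEulerAdj Φ (w.1 x) * G (w.1 x) := by
  rw [← sum_weyl_mul_cherednikEuler, Finset.mul_sum, ← Finset.sum_add_distrib]
  refine Finset.sum_congr rfl fun w _ => ?_
  rw [← hG.fderiv_self_add_absRho_mul (regular_weyl w hx), absRho_weyl]
  ring

end IsOpdamR

end Operators

section ChainWeights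

namespace HOData

variable {V : Type*} [NormedAddCommGroup V] [InnerProductSpace ℝ V]

/-- The sum over all chains of `i` successive reflections of `y` in positive roots `α` of the
products of the weights `k_α (α, ·)⁻`. Every reflection of nonzero weight moves the point up
towards the positive chamber. -/
def chainTerm (D : HOData V) : ℕ → V → ℝ
  | 0, _ => 1
  | i + 1, y => ∑ α ∈ D.Rpos, D.k α * (⟪α, y⟫⁻ * chainTerm D i (rRefl α y))

/-- The sum over all chains of at most `j` reflections. Up to bounded multiples of
`chainWeight D j`, the operator `cherednikEulerAdj` maps it to `chainWeight D (j + 1)`. -/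
def chainWeight (D : HOData V) (j : ℕ) (y : V) : ℝ := ∑ i ∈ Finset.range (j + 1), D.chainTerm i y

lemma chainTerm_nonneg (D : HOData V) (i : ℕ) (y : V) : 0 ≤ D.chainTerm i y := by
  induction i generalizing y with
  | zero => exact zero_le_one
  | succ i ih =>
    exact Finset.sum_nonneg fun α hα =>
      mul_nonneg (k_pos_of_mem_Rpos hα).le (mul_nonneg (negPart_nonneg _) (ih _))

lemma chainTerm_smul (D : HOData V) {t : ℝ} (ht : 0 ≤ t) (i : ℕ) (y : V) :
    D.chainTerm i (t • y) = t ^ i * D.chainTerm i y := by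
  induction i generalizing y with
  | zero => simp only [chainTerm, pow_zero, mul_one]
  | succ i ih =>
    have hneg : ∀ α, ⟪α, t • y⟫⁻ = t * ⟪α, y⟫⁻ := fun α => by
      rw [real_inner_smul_right, negPart_eq_neg_inf_zero, negPart_eq_neg_inf_zero, mul_neg,
        mul_min_of_nonneg _ _ ht, mul_zero]
    simp only [chainTerm, rRefl_smul, ih, hneg, Finset.mul_sum]
    exact Finset.sum_congr rfl fun α _ => by ring

lemma chainTerm_eq_zero_of_card_lt (D : HOData V) {S : Finset V}
    (hS : ∀ α ∈ D.Rpos, ∀ v ∈ S, rRefl α v ∈ S) {u : V} (hu : ∀ α ∈ D.Rpos, 0 < ⟪α, u⟫) {i : ℕ}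
    {y : V} (hy : y ∈ S) (hi : (S.filter fun v => ⟪y, u⟫ < ⟪v, u⟫).card < i) :
    D.chainTerm i y = 0 := by
  induction i generalizing y with
  | zero => exact absurd hi (Nat.not_lt_zero _)
  | succ i ih =>
    refine Finset.sum_eq_zero fun α hα => ?_
    rcases le_or_gt 0 ⟪α, y⟫ with h | h
    · rw [negPart_eq_zero.2 h, zero_mul, mul_zero]
    have hup := inner_lt_inner_rRefl (hu α hα) h
    have hmem := hS α hα y hy
    have hssub : (S.filter fun v => ⟪rRefl α y, u⟫ < ⟪v, u⟫) ⊂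
        S.filter fun v => ⟪y, u⟫ < ⟪v, u⟫ := by
      refine (Finset.ssubset_iff_of_subset ?_).2
        ⟨rRefl α y, Finset.mem_filter.2 ⟨hmem, hup⟩, by simp⟩
      exact Finset.monotone_filter_right S fun v _ hv => hup.trans hv
    rw [ih hmem ((Finset.card_lt_card hssub).trans_le (Nat.lt_succ_iff.1 hi)), mul_zero, mul_zero]

lemma chainTerm_weyl_eq_zero (D : HOData V) [Fintype (weylGroup D)] (w : weylGroup D) (x : V) :
    D.chainTerm (Fintype.card (weylGroup D) + 1) (w.1 x) = 0 := by
  obtain ⟨u, hu⟩ := D.pos_char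
  let orbit : Finset V := Finset.univ.image fun w : weylGroup D => w.1 x
  have horbit : ∀ α ∈ D.Rpos, ∀ v ∈ orbit, rRefl α v ∈ orbit := by
    intro α hα v hv
    obtain ⟨w, -, rfl⟩ := Finset.mem_image.1 hv
    rw [← weylRefl_mul_apply (D.pos_subset hα)]
    exact Finset.mem_image_of_mem _ (Finset.mem_univ _)
  refine D.chainTerm_eq_zero_of_card_lt horbit (fun α hα => (hu α (D.pos_subset hα)).1 hα)
    (Finset.mem_image_of_mem _ (Finset.mem_univ w)) (Nat.lt_succ_of_le ?_)
  exact (Finset.card_filter_le _ _).trans Finset.card_image_le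

lemma chainWeight_zero (D : HOData V) (y : V) : D.chainWeight 0 y = 1 := by
  simp only [chainWeight, zero_add, Finset.sum_range_one, chainTerm]

lemma chainWeight_succ (D : HOData V) (j : ℕ) (y : V) :
    D.chainWeight (j + 1) y =
      1 + ∑ α ∈ D.Rpos, D.k α * (⟪α, y⟫⁻ * D.chainWeight j (rRefl α y)) := by
  rw [chainWeight, Finset.sum_range_succ', add_comm]
  simp only [chainTerm, chainWeight, Finset.mul_sum]
  rw [Finset.sum_comm]

lemma chainWeight_le_succ (D : HOData V) (j : ℕ) (y : V) :
    D.chainWeight j y ≤ D.chainWeight (j + 1) y := by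
  rw [chainWeight, chainWeight, Finset.sum_range_succ _ (j + 1)]
  exact le_add_of_nonneg_right (D.chainTerm_nonneg _ _)

lemma one_le_chainWeight (D : HOData V) (j : ℕ) (y : V) : 1 ≤ D.chainWeight j y := by
  rw [← D.chainWeight_zero y]
  exact monotone_nat_of_le_succ (f := fun j => D.chainWeight j y)
    (fun j => D.chainWeight_le_succ j y) (Nat.zero_le j)

lemma chainWeight_nonneg (D : HOData V) (j : ℕ) (y : V) : 0 ≤ D.chainWeight j y :=
  zero_le_one.trans (D.one_le_chainWeight j y)

lemma chainWeight_card_succ (D : HOData V) [Fintype (weylGroup D)] (w : weylGroup D) (x : V) :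
    D.chainWeight (Fintype.card (weylGroup D) + 1) (w.1 x) =
      D.chainWeight (Fintype.card (weylGroup D)) (w.1 x) := by
  rw [chainWeight, Finset.sum_range_succ, chainTerm_weyl_eq_zero, add_zero, chainWeight]

lemma chainWeight_smul (D : HOData V) {t : ℝ} (ht : 0 ≤ t) (j : ℕ) (y : V) :
    D.chainWeight j (t • y) = ∑ i ∈ Finset.range (j + 1), t ^ i * D.chainTerm i y :=
  Finset.sum_congr rfl fun i _ => D.chainTerm_smul ht i y

lemma continuousOn_chainWeight_smul (D : HOData V) (j : ℕ) (y : V) :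
    ContinuousOn (fun t : ℝ => D.chainWeight j (t • y)) (Set.Ici 0) :=
  ContinuousOn.congr (by fun_prop) fun _ ht => D.chainWeight_smul ht j y

lemma exists_hasDerivAt_chainWeight_smul (D : HOData V) (j : ℕ) (y : V) {t : ℝ} (ht : 0 < t) :
    ∃ e, HasDerivAt (fun τ : ℝ => D.chainWeight j (τ • y)) e t ∧ 0 ≤ t * e ∧
      t * e ≤ j * D.chainWeight j (t • y) := by
  have hpoly : HasDerivAt (fun τ : ℝ => ∑ i ∈ Finset.range (j + 1), τ ^ i * D.chainTerm i y)
      (∑ i ∈ Finset.range (j + 1), i * t ^ (i - 1) * D.chainTerm i y) t :=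
    HasDerivAt.fun_sum fun i _ => (hasDerivAt_pow i t).mul_const _
  have hEuler : t * ∑ i ∈ Finset.range (j + 1), i * t ^ (i - 1) * D.chainTerm i y =
      ∑ i ∈ Finset.range (j + 1), i * (t ^ i * D.chainTerm i y) := by
    rw [Finset.mul_sum]
    refine Finset.sum_congr rfl fun i _ => ?_
    cases i with
    | zero => simp
    | succ i => rw [Nat.add_sub_cancel]; ring
  have hterm : ∀ i, 0 ≤ t ^ i * D.chainTerm i y := fun i =>
    mul_nonneg (pow_nonneg ht.le i) (D.chainTerm_nonneg i y)
  refine ⟨_, hpoly.congr_of_eventuallyEq ?_, ?_, ?_⟩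
  · filter_upwards [lt_mem_nhds ht] with τ hτ using D.chainWeight_smul hτ.le j y
  · rw [hEuler]
    exact Finset.sum_nonneg fun i _ => mul_nonneg i.cast_nonneg (hterm i)
  · rw [hEuler, D.chainWeight_smul ht.le, Finset.mul_sum]
    refine Finset.sum_le_sum fun i hi => mul_le_mul_of_nonneg_right ?_ (hterm i)
    exact_mod_cast Finset.mem_range_succ_iff.1 hi

end HOData

end ChainWeights

section ChainWeightEstimates

namespace HOData

variable {V : Type*} [NormedAddCommGroup V] [InnerProductSpace ℝ V]

lemma k_mul_negPart_mul_chainWeight_le (D : HOData V) (j : ℕ) {α : V} (hα : α ∈ D.Rpos) (y : V) :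
    D.k α * (⟪α, y⟫⁻ * D.chainWeight j (rRefl α y)) ≤ D.chainWeight (j + 1) y := by
  rw [chainWeight_succ]
  have hsingle := Finset.single_le_sum
    (f := fun α => D.k α * (⟪α, y⟫⁻ * D.chainWeight j (rRefl α y)))
    (fun β hβ => mul_nonneg (k_pos_of_mem_Rpos hβ).le
      (mul_nonneg (negPart_nonneg _) (D.chainWeight_nonneg j _))) hα
  linarith

lemma k_mul_negPart_mul_chainWeight_le_of_near_wall (D : HOData V) {j : ℕ} {C : ℝ} (hC : 0 ≤ C)
    (hj : ∀ y y', D.chainWeight j y' ≤ C * (1 + ‖y' - y‖) ^ j * D.chainWeight j y)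
    {α : V} (hα : α ∈ D.Rpos) {y y' : V} (hnear : |⟪α, y⟫| ≤ ‖α‖ * ‖y' - y‖) :
    D.k α * (⟪α, y'⟫⁻ * D.chainWeight j (rRefl α y')) ≤
      D.k α * (2 * ‖α‖ * C * 3 ^ j) * ((1 + ‖y' - y‖) ^ (j + 1) * D.chainWeight (j + 1) y) := by
  have hk := k_pos_of_mem_Rpos hα
  have hα_pos : 0 < ‖α‖ := norm_pos_iff.2 (D.root_ne_zero α (D.pos_subset hα))
  have hneg : ⟪α, y'⟫⁻ ≤ 2 * ‖α‖ * (1 + ‖y' - y‖) := by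
    have hle : ⟪α, y'⟫⁻ ≤ |⟪α, y'⟫| := by
      rw [← posPart_add_negPart]
      exact le_add_of_nonneg_left (posPart_nonneg _)
    linarith [abs_sub_abs_le_abs_sub ⟪α, y'⟫ ⟪α, y⟫, abs_inner_sub_inner_le α y y']
  have hdist : 1 + ‖rRefl α y' - y‖ ≤ 3 * (1 + ‖y' - y‖) := by
    have hself : ‖rRefl α y - y‖ ≤ 2 * ‖y' - y‖ := by
      rw [norm_rRefl_sub_self, div_le_iff₀ hα_pos]
      linarith
    have htri := norm_sub_le_norm_sub_add_norm_sub (rRefl α y') (rRefl α y) y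
    rw [norm_rRefl_sub_rRefl] at htri
    linarith
  calc D.k α * (⟪α, y'⟫⁻ * D.chainWeight j (rRefl α y'))
      ≤ D.k α * (2 * ‖α‖ * (1 + ‖y' - y‖) *
          (C * (3 * (1 + ‖y' - y‖)) ^ j * D.chainWeight (j + 1) y)) := by
        gcongr
        · exact D.chainWeight_nonneg j _
        · refine (hj y (rRefl α y')).trans ?_
          gcongr
          · exact D.chainWeight_nonneg j y
          · exact D.chainWeight_le_succ j y
    _ = _ := by rw [mul_pow]; ring

lemma k_mul_negPart_mul_chainWeight_le_of_far_from_wall (D : HOData V) {j : ℕ} {C : ℝ}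
    (hC : 0 ≤ C) (hj : ∀ y y', D.chainWeight j y' ≤ C * (1 + ‖y' - y‖) ^ j * D.chainWeight j y)
    {α : V} (hα : α ∈ D.Rpos) {y y' : V} (hfar : ‖α‖ * ‖y' - y‖ ≤ |⟪α, y⟫|) :
    D.k α * (⟪α, y'⟫⁻ * D.chainWeight j (rRefl α y')) ≤
      2 * C * ((1 + ‖y' - y‖) ^ (j + 1) * D.chainWeight (j + 1) y) := by
  have hk := k_pos_of_mem_Rpos hα
  have hneg := negPart_le_two_mul_negPart ((abs_inner_sub_inner_le α y y').trans hfar)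
  calc D.k α * (⟪α, y'⟫⁻ * D.chainWeight j (rRefl α y'))
      ≤ D.k α * (2 * ⟪α, y⟫⁻ * (C * (1 + ‖y' - y‖) ^ j * D.chainWeight j (rRefl α y))) := by
        gcongr
        · exact D.chainWeight_nonneg j _
        · exact norm_rRefl_sub_rRefl α y' y ▸ hj (rRefl α y) (rRefl α y')
    _ = 2 * C * ((1 + ‖y' - y‖) ^ j *
          (D.k α * (⟪α, y⟫⁻ * D.chainWeight j (rRefl α y)))) := by ring
    _ ≤ 2 * C * ((1 + ‖y' - y‖) ^ j * D.chainWeight (j + 1) y) := by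
        gcongr
        exact D.k_mul_negPart_mul_chainWeight_le j hα y
    _ ≤ 2 * C * ((1 + ‖y' - y‖) ^ (j + 1) * D.chainWeight (j + 1) y) := by
        gcongr
        · exact D.chainWeight_nonneg (j + 1) y
        · exact le_add_of_nonneg_right (norm_nonneg _)
        · exact j.le_succ

lemma exists_chainWeight_le_mul_chainWeight (D : HOData V) (j : ℕ) :
    ∃ C, 0 ≤ C ∧ ∀ y y', D.chainWeight j y' ≤ C * (1 + ‖y' - y‖) ^ j * D.chainWeight j y := by
  induction j with
  | zero => exact ⟨1, zero_le_one, fun y y' => by simp [chainWeight_zero]⟩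
  | succ j ih =>
    obtain ⟨C, hC, hj⟩ := ih
    have hterm_nonneg : ∀ α ∈ D.Rpos, 0 ≤ D.k α * (2 * ‖α‖ * C * 3 ^ j) + 2 * C := fun α hα => by
      have := k_pos_of_mem_Rpos hα
      positivity
    refine ⟨1 + ∑ α ∈ D.Rpos, (D.k α * (2 * ‖α‖ * C * 3 ^ j) + 2 * C),
      add_nonneg zero_le_one (Finset.sum_nonneg hterm_nonneg), fun y y' => ?_⟩
    rw [chainWeight_succ D j y', mul_assoc, add_mul, one_mul, Finset.sum_mul]
    have hΦ := D.chainWeight_nonneg (j + 1) y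
    refine add_le_add (one_le_mul_of_one_le_of_one_le
      (one_le_pow₀ (le_add_of_nonneg_right (norm_nonneg _))) (D.one_le_chainWeight _ y))
      (Finset.sum_le_sum fun α hα => ?_)
    have hk := k_pos_of_mem_Rpos hα
    rw [add_mul]
    rcases le_total |⟪α, y⟫| (‖α‖ * ‖y' - y‖) with hnear | hfar
    · exact le_add_of_le_of_nonneg
        (D.k_mul_negPart_mul_chainWeight_le_of_near_wall hC hj hα hnear) (by positivity)
    · exact le_add_of_nonneg_of_le (by positivity)
        (D.k_mul_negPart_mul_chainWeight_le_of_far_from_wall hC hj hα hfar)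

lemma exists_abs_divExpSubOne_mul_sub_le (D : HOData V) (j : ℕ) (α : V) :
    ∃ C, 0 ≤ C ∧ ∀ y, |divExpSubOne |⟪α, y⟫| * (D.chainWeight j (rRefl α y) - D.chainWeight j y)| ≤
      C * D.chainWeight j y := by
  obtain ⟨C, hC, hj⟩ := D.exists_chainWeight_le_mul_chainWeight j
  obtain ⟨B, hB, hdecay⟩ := exists_divExpSubOne_mul_pow_le j (c := 2 / ‖α‖) (by positivity)
  refine ⟨C * B + 1, by positivity, fun y => ?_⟩
  have hΦ := D.chainWeight_nonneg j y
  have hd := divExpSubOne_nonneg (abs_nonneg ⟪α, y⟫)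
  have hreflected : divExpSubOne |⟪α, y⟫| * D.chainWeight j (rRefl α y) ≤
      C * B * D.chainWeight j y := by
    have hgrowth := hj y (rRefl α y)
    rw [norm_rRefl_sub_self, mul_div_right_comm] at hgrowth
    calc divExpSubOne |⟪α, y⟫| * D.chainWeight j (rRefl α y)
        ≤ divExpSubOne |⟪α, y⟫| * (C * (1 + 2 / ‖α‖ * |⟪α, y⟫|) ^ j * D.chainWeight j y) := by
          gcongr
      _ = C * (divExpSubOne |⟪α, y⟫| * (1 + 2 / ‖α‖ * |⟪α, y⟫|) ^ j) * D.chainWeight j y := by ring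
      _ ≤ C * B * D.chainWeight j y := by
          gcongr
          exact hdecay _ (abs_nonneg _)
  have hself := mul_le_mul_of_nonneg_right (divExpSubOne_le_one (abs_nonneg ⟪α, y⟫)) hΦ
  have hreflected_nonneg := mul_nonneg hd (D.chainWeight_nonneg j (rRefl α y))
  have hself_nonneg := mul_nonneg hd hΦ
  have hbound_nonneg : 0 ≤ C * B * D.chainWeight j y := by positivity
  rw [mul_sub, add_mul, one_mul]
  exact abs_sub_le_of_nonneg_of_le
    hreflected_nonneg (by linarith only [hreflected, hΦ])
    hself_nonneg (by linarith only [hself, hbound_nonneg])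

lemma exists_abs_cherednikEulerAdj_sub_le (D : HOData V) (j : ℕ) :
    ∃ C, 0 ≤ C ∧ ∀ y, |D.cherednikEulerAdj (D.chainWeight j) y - D.chainWeight (j + 1) y| ≤
      C * D.chainWeight j y := by
  choose B hB hterm using D.exists_abs_divExpSubOne_mul_sub_le j
  refine ⟨1 + ∑ α ∈ D.Rpos, D.k α * B α, add_nonneg zero_le_one (Finset.sum_nonneg fun α hα =>
    mul_nonneg (k_pos_of_mem_Rpos hα).le (hB α)), fun y => ?_⟩
  have hsub : D.cherednikEulerAdj (D.chainWeight j) y - D.chainWeight (j + 1) y =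
      ∑ α ∈ D.Rpos, D.k α * (divExpSubOne |⟪α, y⟫| *
        (D.chainWeight j (rRefl α y) - D.chainWeight j y)) - 1 := by
    rw [chainWeight_succ, cherednikEulerAdj, sub_add_eq_sub_sub, sub_right_comm,
      ← Finset.sum_sub_distrib]
    exact congrArg (· - 1) (Finset.sum_congr rfl fun α _ => by ring)
  rw [hsub, add_mul, one_mul, add_comm, Finset.sum_mul]
  refine (abs_sub _ _).trans (add_le_add ((Finset.abs_sum_le_sum_abs _ _).trans
    (Finset.sum_le_sum fun α hα => ?_)) (by simpa using D.one_le_chainWeight j y))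
  rw [abs_mul, abs_of_pos (k_pos_of_mem_Rpos hα), mul_assoc]
  exact mul_le_mul_of_nonneg_left (hterm α y) (k_pos_of_mem_Rpos hα).le

end HOData

end ChainWeightEstimates

section Moments

namespace HOData

variable {V : Type*} [NormedAddCommGroup V] [InnerProductSpace ℝ V]

/-- The moments of the values of `G` along a Weyl orbit, with respect to the chain weights. -/
def moment (D : HOData V) [Fintype (weylGroup D)] (G : V → ℝ) (j : ℕ) (x : V) : ℝ :=
  ∑ w : weylGroup D, D.chainWeight j (w.1 x) * G (w.1 x)

lemma moment_zero_right (D : HOData V) [Fintype (weylGroup D)] (G : V → ℝ) (j : ℕ) :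
    D.moment G j 0 = Fintype.card (weylGroup D) * G 0 := by
  have hweight : D.chainWeight j 0 = 1 := by
    cases j with
    | zero => exact D.chainWeight_zero 0
    | succ j => simp [chainWeight_succ]
  simp [moment, hweight]

lemma moment_card_succ (D : HOData V) [Fintype (weylGroup D)] (G : V → ℝ) (x : V) :
    D.moment G (Fintype.card (weylGroup D) + 1) x = D.moment G (Fintype.card (weylGroup D)) x := by
  simp only [moment, chainWeight_card_succ]

lemma continuousOn_moment_smul (D : HOData V) [Fintype (weylGroup D)] {G : V → ℝ}
    (hG : Continuous G) (j : ℕ) (x : V) :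
    ContinuousOn (fun t : ℝ => D.moment G j (t • x)) (Set.Ici 0) := by
  simp only [moment, map_smul]
  exact continuousOn_finsetSum _ fun w _ =>
    (D.continuousOn_chainWeight_smul j (w.1 x)).mul (by fun_prop)

end HOData

namespace IsOpdamR

open HOData

variable {V : Type*} [NormedAddCommGroup V] [InnerProductSpace ℝ V] {D : HOData V}
  [Fintype (weylGroup D)] {G : V → ℝ}

lemma moment_nonneg (hG : IsOpdamR D 0 G) (j : ℕ) {x : V} (hx : HORegular D x) :
    0 ≤ D.moment G j x :=
  Finset.sum_nonneg fun w _ =>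
    mul_nonneg (D.chainWeight_nonneg j _) (hG.pos_of_regular (regular_weyl w hx)).le

lemma exists_hasDerivAt_moment_smul_eq (hG : IsOpdamR D 0 G) (j : ℕ) {x : V}
    (hx : HORegular D x) {t : ℝ} (ht : t ≠ 0) {e : weylGroup D → ℝ}
    (he : ∀ w, HasDerivAt (fun τ : ℝ => D.chainWeight j (τ • w.1 x)) (e w) t) :
    ∃ d, HasDerivAt (fun τ : ℝ => D.moment G j (τ • x)) d t ∧
      t * d + D.absRho (t • x) * D.moment G j (t • x) =
        ∑ w : weylGroup D,
          (t * e w + D.cherednikEulerAdj (D.chainWeight j) (w.1 (t • x))) * G (w.1 (t • x)) := by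
  have hderiv : HasDerivAt (fun τ : ℝ => D.moment G j (τ • x))
      (∑ w : weylGroup D, (e w * G (t • w.1 x) +
        D.chainWeight j (t • w.1 x) * fderiv ℝ G (t • w.1 x) (w.1 x))) t := by
    simp only [moment, map_smul]
    exact HasDerivAt.fun_sum fun w _ => (he w).mul (hasDerivAt_comp_smul (hG.differentiable _))
  refine ⟨_, hderiv, ?_⟩
  simp only [add_mul, Finset.sum_add_distrib]
  rw [← hG.sum_weyl_mul_fderiv_self_add (D.chainWeight j) (regular_smul ht hx), ← add_assoc, moment,
    ← Finset.sum_add_distrib, ← Finset.sum_add_distrib, Finset.mul_sum]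
  refine congrArg (· + _) (Finset.sum_congr rfl fun w _ => ?_)
  rw [map_smul w.1, ContinuousLinearMap.map_smul, smul_eq_mul]
  ring

lemma exists_hasDerivAt_moment_smul (hG : IsOpdamR D 0 G) (j : ℕ) :
    ∃ C, 0 ≤ C ∧ ∀ x, HORegular D x → ∀ t : ℝ, 0 < t →
      ∃ d, HasDerivAt (fun τ : ℝ => D.moment G j (τ • x)) d t ∧
        |t * d + D.absRho (t • x) * D.moment G j (t • x) - D.moment G (j + 1) (t • x)| ≤
          C * D.moment G j (t • x) := by
  obtain ⟨C, hC, hadj⟩ := D.exists_abs_cherednikEulerAdj_sub_le j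
  refine ⟨j + C, by positivity, fun x hx t ht => ?_⟩
  choose e he he_nonneg he_le using fun w : weylGroup D =>
    D.exists_hasDerivAt_chainWeight_smul j (w.1 x) ht
  obtain ⟨d, hd, hEuler⟩ := hG.exists_hasDerivAt_moment_smul_eq j hx ht.ne' he
  refine ⟨d, hd, ?_⟩
  rw [hEuler, moment, moment, ← Finset.sum_sub_distrib, Finset.mul_sum]
  refine (Finset.abs_sum_le_sum_abs _ _).trans (Finset.sum_le_sum fun w _ => ?_)
  have hpos := (hG.pos_of_regular (regular_weyl w (regular_smul ht.ne' hx))).le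
  rw [← sub_mul, abs_mul, abs_of_nonneg hpos, ← mul_assoc, add_mul, add_sub_assoc]
  refine mul_le_mul_of_nonneg_right ((abs_add_le _ _).trans (add_le_add ?_ (hadj _))) hpos
  rw [abs_of_nonneg (he_nonneg w), map_smul]
  exact he_le w

/-- The Lyapunov function `L μ_j - μ_{j+1}` stays positive along rays because the leading terms of
its Euler derivative, `L μ_{j+1} - μ_{j+2}`, dominate once `μ_{j+2} ≤ K μ_{j+1}`. -/
lemma moment_succ_le_of_moment_succ_succ_le (hG : IsOpdamR D 0 G) {j : ℕ} {K : ℝ} (hK : 0 ≤ K)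
    (hmoment : ∀ x, HORegular D x → D.moment G (j + 2) x ≤ K * D.moment G (j + 1) x) :
    ∃ L, 0 ≤ L ∧ ∀ x, HORegular D x → D.moment G (j + 1) x ≤ L * D.moment G j x := by
  obtain ⟨C, hC, hderiv⟩ := hG.exists_hasDerivAt_moment_smul j
  obtain ⟨C', hC', hderiv'⟩ := hG.exists_hasDerivAt_moment_smul (j + 1)
  set L := K + C + C' + 2
  refine ⟨L, by positivity, fun x hx => ?_⟩
  let ψ : ℝ → ℝ := fun t => L * D.moment G j (t • x) - D.moment G (j + 1) (t • x)
  have hcont : ∀ i, ContinuousOn (fun t : ℝ => D.moment G i (t • x)) (Set.Icc 0 1) := fun i =>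
    (D.continuousOn_moment_smul hG.differentiable.continuous i x).mono Set.Icc_subset_Ici_self
  have hψ : ∀ t : ℝ, 0 < t → ∃ d, HasDerivAt ψ d t ∧
      -((D.absRho (t • x) + C) * ψ t) ≤ t * d := by
    intro t ht
    obtain ⟨d, hd, hd_le⟩ := hderiv x hx t ht
    obtain ⟨d', hd', hd'_le⟩ := hderiv' x hx t ht
    refine ⟨L * d - d', (hd.const_mul L).sub hd', ?_⟩
    have hreg : HORegular D (t • x) := regular_smul ht.ne' hx
    have hd_ge := mul_le_mul_of_nonneg_left (abs_le.1 hd_le).1 (by positivity : 0 ≤ L)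
    have hd'_ge := (abs_le.1 hd'_le).2
    have hnext := hmoment (t • x) hreg
    have hL_nonneg : 0 ≤ (L - K - C - C') * D.moment G (j + 1) (t • x) :=
      mul_nonneg (by simp only [L]; linarith) (hG.moment_nonneg (j + 1) hreg)
    linarith only [hd_ge, hd'_ge, hnext, hL_nonneg]
  have hpos : 0 < ψ 1 := pos_of_neg_le_mul_deriv (ι := Unit) (ψ := fun _ => ψ)
    (κ := D.absRho x + C) zero_le_one (fun _ => ((hcont j).const_mul L).sub (hcont (j + 1)))
    (fun _ => ?_) (fun _ t ht => let ⟨_, hd, _⟩ := hψ t ht.1; hd.differentiableAt)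
    (fun t ht hnonneg _ => ?_) ()
  · simpa [ψ] using hpos.le
  · have hcard : (0 : ℝ) < Fintype.card (weylGroup D) := by exact_mod_cast Fintype.card_pos
    have : 0 < (L - 1) * Fintype.card (weylGroup D) := mul_pos (by simp only [L]; linarith) hcard
    simp only [ψ, zero_smul, moment_zero_right, hG.2.1]
    linarith
  · obtain ⟨d, hd, hge⟩ := hψ t ht.1
    rw [hd.deriv]
    refine le_trans (neg_le_neg (mul_le_mul_of_nonneg_right ?_ (hnonneg ()))) hge
    rw [absRho_smul D ht.1.le]
    linarith [mul_le_of_le_one_left (absRho_nonneg D x) ht.2.le]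

lemma exists_moment_succ_le (hG : IsOpdamR D 0 G) {j : ℕ}
    (hj : j ≤ Fintype.card (weylGroup D)) :
    ∃ K, 0 ≤ K ∧ ∀ x, HORegular D x → D.moment G (j + 1) x ≤ K * D.moment G j x := by
  induction hj using Nat.decreasingInduction with
  | self => exact ⟨1, zero_le_one, fun x _ => by rw [moment_card_succ, one_mul]⟩
  | of_succ j _ ih =>
    obtain ⟨K, hK, hmoment⟩ := ih
    exact hG.moment_succ_le_of_moment_succ_succ_le hK hmoment

end IsOpdamR

end Moments

section Symmetrization

namespace HOData

variable {V : Type*} [NormedAddCommGroup V] [InnerProductSpace ℝ V]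

lemma cherednikEulerAdj_chainWeight_zero (D : HOData V) (y : V) :
    D.cherednikEulerAdj (D.chainWeight 0) y = D.chainWeight 1 y - D.chainWeight 0 y := by
  simp only [cherednikEulerAdj, chainWeight_succ, chainWeight_zero, sub_self, mul_zero, zero_add,
    mul_one, add_sub_cancel_left]

lemma smul_mem_closure_posChamber {D : HOData V} {t : ℝ} (ht : 0 < t) {x : V}
    (hx : x ∈ closure (posChamber D)) : t • x ∈ closure (posChamber D) :=
  map_mem_closure (continuous_const_smul t) hx fun y hy α hα => by
    rw [real_inner_smul_right]
    exact mul_pos ht (hy α hα)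

end HOData

namespace IsOpdamR

open HOData

variable {V : Type*} [NormedAddCommGroup V] [InnerProductSpace ℝ V] {D : HOData V}
  [Fintype (weylGroup D)] {G : V → ℝ}

lemma contDiff_Fsym (hG : IsOpdamR D 0 G) : ContDiff ℝ 1 (Fsym D G) := by
  have hG_contDiff : ContDiff ℝ 1 G := contDiffOn_univ.1 (hG.1.contDiffOn uniqueDiffOn_univ)
  exact contDiff_const.mul (ContDiff.sum fun w _ => hG_contDiff.comp w.1.contDiff)

lemma fderiv_Fsym_self (hG : IsOpdamR D 0 G) (x : V) :
    fderiv ℝ (Fsym D G) x x = (Fintype.card (weylGroup D) : ℝ)⁻¹ *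
      ∑ w : weylGroup D, fderiv ℝ G (w.1 x) (w.1 x) := by
  have hcomp : ∀ w : weylGroup D, HasFDerivAt (fun y => G (w.1 y))
      ((fderiv ℝ G (w.1 x)).comp (w.1.toContinuousLinearEquiv : V →L[ℝ] V)) x := fun w =>
    (hG.differentiable _).hasFDerivAt.comp x w.1.toContinuousLinearEquiv.hasFDerivAt
  have hF : HasFDerivAt (Fsym D G) _ x := (HasFDerivAt.fun_sum fun w _ => hcomp w).const_mul _
  rw [hF.fderiv]
  simp

lemma inner_rhoHO_mul_Fsym_add_fderiv (hG : IsOpdamR D 0 G) {x : V} (hx : x ∈ posChamber D) :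
    ⟪rhoHO D, x⟫ * Fsym D G x + fderiv ℝ (Fsym D G) x x =
      (Fintype.card (weylGroup D) : ℝ)⁻¹ * (D.moment G 1 x - D.moment G 0 x) := by
  have hpair := hG.sum_weyl_mul_fderiv_self_add (D.chainWeight 0) (regular_of_mem_posChamber hx)
  simp only [cherednikEulerAdj_chainWeight_zero, sub_mul, Finset.sum_sub_distrib] at hpair
  rw [moment, moment, ← hpair, hG.fderiv_Fsym_self, Fsym, absRho_eq_inner_rhoHO hx]
  simp only [chainWeight_zero, one_mul]
  ring

lemma inner_rhoHO_mul_Fsym_add_fderiv_mem_Icc (hG : IsOpdamR D 0 G) {K : ℝ}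
    (hmoment : ∀ x, HORegular D x → D.moment G 1 x ≤ K * D.moment G 0 x) {x : V}
    (hx : x ∈ posChamber D) :
    ⟪rhoHO D, x⟫ * Fsym D G x + fderiv ℝ (Fsym D G) x x ∈ Set.Icc 0 (K * Fsym D G x) := by
  have hreg := regular_of_mem_posChamber hx
  have hF : Fsym D G x = (Fintype.card (weylGroup D) : ℝ)⁻¹ * D.moment G 0 x := by
    simp only [Fsym, moment, chainWeight_zero, one_mul]
  have hmono : D.moment G 0 x ≤ D.moment G 1 x := Finset.sum_le_sum fun w _ =>
    mul_le_mul_of_nonneg_right (D.chainWeight_le_succ 0 _)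
      (hG.pos_of_regular (regular_weyl w hreg)).le
  have hnonneg := hG.moment_nonneg 0 hreg
  have hcard : (0 : ℝ) ≤ (Fintype.card (weylGroup D) : ℝ)⁻¹ := by positivity
  rw [hG.inner_rhoHO_mul_Fsym_add_fderiv hx, hF, mul_left_comm K]
  exact ⟨mul_nonneg hcard (sub_nonneg.2 hmono),
    mul_le_mul_of_nonneg_left (by linarith [hmoment x hreg]) hcard⟩

lemma exists_inner_rhoHO_mul_Fsym_add_fderiv_mem_Icc (hG : IsOpdamR D 0 G) :
    ∃ K, 0 ≤ K ∧ ∀ x ∈ closure (posChamber D),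
      ⟪rhoHO D, x⟫ * Fsym D G x + fderiv ℝ (Fsym D G) x x ∈ Set.Icc 0 (K * Fsym D G x) := by
  obtain ⟨K, hK, hmoment⟩ := hG.exists_moment_succ_le (Nat.zero_le _)
  have hchamber := fun x hx => hG.inner_rhoHO_mul_Fsym_add_fderiv_mem_Icc hmoment (x := x) hx
  have hF := hG.contDiff_Fsym
  have hcont : Continuous fun x => ⟪rhoHO D, x⟫ * Fsym D G x + fderiv ℝ (Fsym D G) x x :=
    ((continuous_const.inner continuous_id).mul hF.continuous).add
      ((hF.continuous_fderiv one_ne_zero).clm_apply continuous_id)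
  have hcontK : Continuous fun x => K * Fsym D G x := continuous_const.mul hF.continuous
  exact ⟨K, hK, fun x hx =>
    ⟨le_on_closure (fun y hy => (hchamber y hy).1) continuousOn_const hcont.continuousOn hx,
      le_on_closure (fun y hy => (hchamber y hy).2) hcont.continuousOn hcontK.continuousOn hx⟩⟩

lemma Fsym_pos (hG : IsOpdamR D 0 G) {x : V} (hx : x ∈ closure (posChamber D)) :
    0 < Fsym D G x := by
  obtain ⟨K, -, hbound⟩ := hG.exists_inner_rhoHO_mul_Fsym_add_fderiv_mem_Icc
  have hline : ∀ t : ℝ, HasDerivAt (fun s : ℝ => Fsym D G (s • x))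
      (fderiv ℝ (Fsym D G) (t • x) x) t := fun t =>
    hasDerivAt_comp_smul (hG.contDiff_Fsym.differentiable one_ne_zero _)
  have hpos := pos_of_neg_le_mul_deriv (ι := Unit) (b := 1) (ψ := fun _ t => Fsym D G (t • x))
    (κ := |⟪rhoHO D, x⟫|) zero_le_one
    (fun _ => (continuous_iff_continuousAt.2 fun t => (hline t).continuousAt).continuousOn)
    (fun _ => by simp [Fsym, hG.2.1]) (fun _ t _ => (hline t).differentiableAt) ?_ ()
  · simpa using hpos
  intro t ht hnonneg _
  have hEuler := (hbound (t • x) (smul_mem_closure_posChamber ht.1 hx)).1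
  have hrho : ⟪rhoHO D, t • x⟫ ≤ |⟪rhoHO D, x⟫| := by
    rw [real_inner_smul_right]
    exact (mul_le_mul_of_nonneg_left (le_abs_self _) ht.1.le).trans
      (mul_le_of_le_one_left (abs_nonneg _) ht.2.le)
  have hrho_mul := mul_le_mul_of_nonneg_right hrho (hnonneg ())
  rw [(hline t).deriv, ← smul_eq_mul t, ← ContinuousLinearMap.map_smul]
  linarith

end IsOpdamR

end Symmetrization

theorem statement8_general {V : Type*} [NormedAddCommGroup V] [InnerProductSpace ℝ V]
    (D : HOData V) [Fintype (weylGroup D)] (Gzero : V → ℝ) (hG0 : IsOpdamR D 0 Gzero) :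
    ∃ K : ℝ, 0 < K ∧ ∀ x ∈ closure (posChamber D),
      0 < Fsym D Gzero x ∧
      0 ≤ ⟪rhoHO D, x⟫ + fderiv ℝ (Fsym D Gzero) x x / Fsym D Gzero x ∧
      ⟪rhoHO D, x⟫ + fderiv ℝ (Fsym D Gzero) x x / Fsym D Gzero x ≤ K := by
  obtain ⟨K, hK, hbound⟩ := hG0.exists_inner_rhoHO_mul_Fsym_add_fderiv_mem_Icc
  refine ⟨K + 1, by linarith, fun x hx => ?_⟩
  have hF := hG0.Fsym_pos hx
  obtain ⟨hnonneg, hle⟩ := hbound x hx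
  rw [← mul_div_cancel_right₀ ⟪rhoHO D, x⟫ hF.ne', ← add_div]
  exact ⟨hF, div_nonneg hnonneg hF.le, ((div_le_iff₀ hF).2 hle).trans (by linarith)⟩

/-- there is `K > 0` with
`0 ≤ (ρ,x) + (x, ∇F₀(x))/F₀(x) ≤ K` for all `x ∈ ā₊`
(this quantity is the Euler operator applied to `log (e^{(ρ,·)} F₀)`). -/
theorem statement8 (D : HOData E) [Fintype (weylGroup D)] (Gzero : E → ℝ)
    (hG0 : IsOpdamR D 0 Gzero) :
    ∃ K : ℝ, 0 < K ∧ ∀ x ∈ closure (posChamber D),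
      0 ≤ ⟪rhoHO D, x⟫ + ⟪x, gradient (Fsym D Gzero) x⟫ / Fsym D Gzero x ∧
      ⟪rhoHO D, x⟫ + ⟪x, gradient (Fsym D Gzero) x⟫ / Fsym D Gzero x ≤ K := by
  obtain ⟨K, hK, hbound⟩ := statement8_general D Gzero hG0
  exact ⟨K, hK, fun x hx => by
    simpa only [inner_gradient_right, conj_trivial] using (hbound x hx).2⟩
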